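/- Let K be a finite extension of ℚ_p (p a prime) and let L|K be a ramified quadratic extension (i.e. [L:K] = 2 and the ramification index of L over K is 2). Then the unit group 𝔬^× of the ring of integers of K is not contained in the norm group N_{L|K}(L^×); that is, there exists a unit u ∈ 𝔬^× which is not the norm of any element of L^×. -/

import Mathlib

/-!
Let `σ` be the nontrivial automorphism of `L|K`, let `P` be a uniformizer of `L`, and put
`d = v_L (σ P - P)`. The trace sends `𝔓 ^ n` into `𝔓 ^ (n + d - 1)`, so the expansion
`N (x + z) = N x + Tr (x * σ z) + N z` shows that the norm induces a map `𝔬_L / 𝔓 ^ d → 𝔬 / 𝔭 ^ d`.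
Since the two residue fields agree, both sides have the same finite cardinality. If every unit of
`K` were a norm, this map would be surjective, hence injective; but `σ P / P` has norm `1`, while
`σ P / P - 1` has valuation `d - 1 < d`.
-/

/-- An additively written, normalized (i.e. surjective onto `ℤ`) discrete
valuation on a field `K`.  All axioms are imposed at nonzero arguments only,
so the value of `v` at `0` is irrelevant.  For a finite extension `K` of
`ℚ_[p]`, the normalized valuation `v : K^× → ℤ` of the paper is such a
structure. -/
structure DValuation (K : Type*) [Field K] where
  /-- the valuation map -/
  v : K → ℤ
  v_mul : ∀ ⦃x y : K⦄, x ≠ 0 → y ≠ 0 → v (x * y) = v x + v y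
  min_le_v_add : ∀ ⦃x y : K⦄, x ≠ 0 → y ≠ 0 → x + y ≠ 0 → min (v x) (v y) ≤ v (x + y)
  v_surj : ∀ m : ℤ, ∃ x : K, x ≠ 0 ∧ v x = m

namespace DValuation

variable {K : Type*} [Field K] (w : DValuation K)

/-- `u ∈ U_m` : `u` is (a unit) congruent to `1` modulo `𝔭^m`; for `m ≥ 1`
this forces `v u = 0`, i.e. `u ∈ 𝔬^×`. -/
def IsUnit₁ (m : ℤ) (u : K) : Prop :=
  u = 1 ∨ m ≤ w.v (u - 1)

end DValuation

section RelIndex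

theorem quotient_mk_eq_mk_iff_sub_mem {A : Type*} [AddCommGroup A] {G G' : AddSubgroup A}
    (a b : G) :
    (QuotientAddGroup.mk a : G ⧸ G'.addSubgroupOf G) = QuotientAddGroup.mk b ↔
      (b - a : A) ∈ G' := by
  rw [QuotientAddGroup.eq, AddSubgroup.mem_addSubgroupOf, neg_add_eq_sub, AddSubgroup.coe_sub]

theorem sub_mem_of_relIndex_le {A B : Type*} [AddCommGroup A] [AddCommGroup B]
    {G G' : AddSubgroup A} {H H' : AddSubgroup B} [G'.IsFiniteRelIndex G] {f : A → B}
    (hmaps : Set.MapsTo f G H) (hsurj : Set.SurjOn f G H)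
    (hcongr : ∀ x ∈ G, ∀ y ∈ G, y - x ∈ G' → f y - f x ∈ H')
    (hindex : G'.relIndex G ≤ H'.relIndex H) {x y : A} (hx : x ∈ G) (hy : y ∈ G)
    (hxy : f y - f x ∈ H') : y - x ∈ G' := by
  let fG : G → H := hmaps.restrict
  let g : G ⧸ G'.addSubgroupOf G → H ⧸ H'.addSubgroupOf H :=
    Quotient.lift (fun a ↦ QuotientAddGroup.mk (fG a)) fun a b hab ↦
      (quotient_mk_eq_mk_iff_sub_mem (fG a) (fG b)).mpr <|
        hcongr a a.2 b b.2 ((quotient_mk_eq_mk_iff_sub_mem a b).mp (Quotient.sound hab))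
  have hg : Function.Surjective g := by
    rintro ⟨b⟩
    obtain ⟨a, ha, hab⟩ := hsurj b.2
    exact ⟨QuotientAddGroup.mk ⟨a, ha⟩, congrArg QuotientAddGroup.mk (Subtype.ext hab)⟩
  have hinj : Function.Injective g := (hg.bijective_of_nat_card_le hindex).injective
  refine (quotient_mk_eq_mk_iff_sub_mem ⟨x, hx⟩ ⟨y, hy⟩).mp (hinj ?_)
  exact (quotient_mk_eq_mk_iff_sub_mem (fG ⟨x, hx⟩) (fG ⟨y, hy⟩)).mpr hxy

end RelIndex

open IsLocalRing TensorProduct in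
theorem finiteDimensional_residueField_tensorProduct {R F V : Type*} [CommRing R] [IsLocalRing R]
    [IsDomain R] [IsPrincipalIdealRing R] [Field F] [Algebra R F] [IsFractionRing R F]
    [AddCommGroup V] [Module R V] [Module F V] [IsScalarTower R F V] [FiniteDimensional F V]
    (N : Submodule R V) : FiniteDimensional (ResidueField R) (ResidueField R ⊗[R] N) := by
  -- Lifts to the flat module `N` of a basis of the special fibre are independent over `F`.
  have : Module.IsTorsionFree R V := .trans_faithfulSMul R F V
  let b := Module.Free.chooseBasis (ResidueField R) (ResidueField R ⊗[R] N)
  choose v hv using fun i ↦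
    TensorProduct.mk_surjective R N (ResidueField R) residue_surjective (b i)
  have hR : LinearIndependent R v := by
    refine Module.IsLocalRing.linearIndependent_of_flat v ?_
    convert b.linearIndependent using 1
    exact funext hv
  have hF : LinearIndependent F fun i ↦ (v i : V) :=
    (LinearIndependent.iff_fractionRing R F).mp (hR.map' N.subtype N.ker_subtype)
  have := hF.finite
  exact .of_basis b

section Quadratic

variable {K L : Type*} [Field K] [Field L] [Algebra K L]

theorem norm_algEquiv_div_self [FiniteDimensional K L] (σ : L ≃ₐ[K] L) {x : L}
    (hx : x ≠ 0) : Algebra.norm K (σ x / x) = 1 := by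
  apply mul_right_cancel₀ (Algebra.norm_ne_zero_iff (R := K).mpr hx)
  rw [← map_mul, div_mul_cancel₀ _ hx, one_mul, Algebra.norm_eq_of_algEquiv]

variable [Algebra.IsQuadraticExtension K L]

variable (K L) in
theorem exists_algEquiv_ne_one_of_isQuadraticExtension [Algebra.IsSeparable K L] :
    ∃ σ : L ≃ₐ[K] L, σ ≠ 1 := by
  have hcard : Nat.card (L ≃ₐ[K] L) = 2 :=
    (IsGalois.card_aut_eq_finrank K L).trans (Algebra.IsQuadraticExtension.finrank_eq_two K L)
  exact (Nat.card_eq_two_iff' 1).mp hcard |>.exists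

variable [Algebra.IsSeparable K L] {σ : L ≃ₐ[K] L}

open scoped Classical in
theorem univ_algEquiv_eq_pair (hσ : σ ≠ 1) : (Finset.univ : Finset (L ≃ₐ[K] L)) = {1, σ} := by
  have hcard : Fintype.card (L ≃ₐ[K] L) = 2 := by
    rw [← Nat.card_eq_fintype_card, IsGalois.card_aut_eq_finrank,
      Algebra.IsQuadraticExtension.finrank_eq_two]
  refine (Finset.eq_of_subset_of_card_le (Finset.subset_univ _) ?_).symm
  rw [Finset.card_univ, hcard, Finset.card_pair hσ.symm]

theorem algebraMap_norm_eq_mul (hσ : σ ≠ 1) (x : L) :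
    algebraMap K L (Algebra.norm K x) = x * σ x := by
  classical
  rw [Algebra.norm_eq_prod_automorphisms, univ_algEquiv_eq_pair hσ, Finset.prod_pair hσ.symm,
    AlgEquiv.one_apply]

theorem algebraMap_trace_eq_add (hσ : σ ≠ 1) (x : L) :
    algebraMap K L (Algebra.trace K L x) = x + σ x := by
  classical
  rw [trace_eq_sum_automorphisms, univ_algEquiv_eq_pair hσ, Finset.sum_pair hσ.symm,
    AlgEquiv.one_apply]

theorem mem_range_algebraMap_of_fixed (hσ : σ ≠ 1) {x : L} (hx : σ x = x) :
    x ∈ Set.range (algebraMap K L) := by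
  classical
  refine (IsGalois.mem_range_algebraMap_iff_fixed x).mpr fun τ ↦ ?_
  have hτ : τ ∈ ({1, σ} : Finset (L ≃ₐ[K] L)) := univ_algEquiv_eq_pair hσ ▸ Finset.mem_univ τ
  rw [Finset.mem_insert, Finset.mem_singleton] at hτ
  rcases hτ with rfl | rfl
  exacts [rfl, hx]

theorem algEquiv_involutive_of_ne_one (hσ : σ ≠ 1) : Function.Involutive σ := by
  intro x
  have h := congrArg σ (algebraMap_trace_eq_add hσ x)
  rw [AlgEquiv.commutes, map_add, algebraMap_trace_eq_add hσ] at h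
  linear_combination -h

theorem exists_eq_algebraMap_add_mul (hσ : σ ≠ 1) {P : L} (hP : σ P ≠ P) (x : L) :
    ∃ a b : K, x = algebraMap K L a + algebraMap K L b * P := by
  have hP' : σ P - P ≠ 0 := sub_ne_zero.mpr hP
  obtain ⟨b, hb⟩ : (σ x - x) / (σ P - P) ∈ Set.range (algebraMap K L) := by
    apply mem_range_algebraMap_of_fixed hσ
    rw [map_div₀, map_sub, map_sub, algEquiv_involutive_of_ne_one hσ,
      algEquiv_involutive_of_ne_one hσ, ← neg_sub (σ x), ← neg_sub (σ P), neg_div_neg_eq]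
  obtain ⟨a, ha⟩ : x - algebraMap K L b * P ∈ Set.range (algebraMap K L) := by
    apply mem_range_algebraMap_of_fixed hσ
    rw [eq_div_iff hP'] at hb
    rw [map_sub, map_mul, AlgEquiv.commutes]
    linear_combination -hb
  exact ⟨a, b, by rw [ha, sub_add_cancel]⟩

end Quadratic

namespace DValuation

section FracIdeal

variable {K : Type*} [Field K] (w : DValuation K)

theorem v_one : w.v 1 = 0 := by
  have h := w.v_mul (one_ne_zero (α := K)) one_ne_zero
  rw [mul_one] at h
  lia

theorem v_neg (x : K) : w.v (-x) = w.v x := by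
  rcases eq_or_ne x 0 with rfl | hx
  · rw [neg_zero]
  have h1 : (-1 : K) ≠ 0 := neg_ne_zero.mpr one_ne_zero
  have hsq := w.v_mul h1 h1
  have hmul := w.v_mul h1 hx
  rw [neg_mul_neg, mul_one, v_one] at hsq
  rw [neg_one_mul] at hmul
  lia

theorem v_div {x y : K} (hx : x ≠ 0) (hy : y ≠ 0) : w.v (x / y) = w.v x - w.v y := by
  have h := w.v_mul (div_ne_zero hx hy) hy
  rw [div_mul_cancel₀ _ hy] at h
  lia

/-- The fractional ideal `𝔭 ^ n` of the valuation ring of `w`, as an additive subgroup of `K`.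
The disjunct `x = 0` gives `0` its valuation `∞`, whatever the value `w.v 0`. -/
def fracIdeal (n : ℤ) : AddSubgroup K where
  carrier := {x | x = 0 ∨ n ≤ w.v x}
  zero_mem' := Or.inl rfl
  add_mem' {x y} hx hy := by
    rcases eq_or_ne x 0 with rfl | hx0
    · rwa [zero_add]
    rcases eq_or_ne y 0 with rfl | hy0
    · rwa [add_zero]
    refine or_iff_not_imp_left.mpr fun hxy ↦ ?_
    exact (le_min (hx.resolve_left hx0) (hy.resolve_left hy0)).trans (w.min_le_v_add hx0 hy0 hxy)
  neg_mem' {x} hx := by simpa only [Set.mem_ofPred_eq, neg_eq_zero, v_neg] using hx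

variable {w} {m n : ℤ} {x y : K}

theorem mem_fracIdeal_iff (hx : x ≠ 0) : x ∈ w.fracIdeal n ↔ n ≤ w.v x :=
  or_iff_right hx

variable (w) in
theorem mem_fracIdeal_v (x : K) : x ∈ w.fracIdeal (w.v x) :=
  Or.inr le_rfl

variable (w) in
theorem one_mem_fracIdeal_zero : (1 : K) ∈ w.fracIdeal 0 :=
  w.v_one ▸ w.mem_fracIdeal_v 1

theorem fracIdeal_mono (hmn : m ≤ n) : w.fracIdeal n ≤ w.fracIdeal m :=
  fun _ hx ↦ hx.imp_right hmn.trans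

theorem mul_mem_fracIdeal (hx : x ∈ w.fracIdeal m) (hy : y ∈ w.fracIdeal n) :
    x * y ∈ w.fracIdeal (m + n) := by
  rcases eq_or_ne x 0 with rfl | hx0
  · simp only [zero_mul, zero_mem]
  rcases eq_or_ne y 0 with rfl | hy0
  · simp only [mul_zero, zero_mem]
  rw [mem_fracIdeal_iff hx0] at hx
  rw [mem_fracIdeal_iff hy0] at hy
  rw [mem_fracIdeal_iff (mul_ne_zero hx0 hy0), w.v_mul hx0 hy0]
  exact add_le_add hx hy

theorem mul_mem_fracIdeal_iff (hx : x ≠ 0) :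
    x * y ∈ w.fracIdeal (w.v x + n) ↔ y ∈ w.fracIdeal n := by
  rcases eq_or_ne y 0 with rfl | hy
  · simp only [mul_zero, zero_mem]
  rw [mem_fracIdeal_iff hy, mem_fracIdeal_iff (mul_ne_zero hx hy), w.v_mul hx hy,
    add_le_add_iff_left]

theorem mem_fracIdeal_of_add_mem (hx : x ≠ 0) (hxy : w.v x ≠ w.v y)
    (hadd : x + y ∈ w.fracIdeal n) : y ∈ w.fracIdeal n := by
  by_contra hy
  have hy0 : y ≠ 0 := fun h ↦ hy (h ▸ zero_mem _)
  have hyn : w.v y < n := not_le.mp (mt (mem_fracIdeal_iff hy0).mpr hy)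
  rcases hxy.lt_or_gt with hlt | hgt
  · have hx' : x + y - y ∈ w.fracIdeal (w.v x + 1) :=
      sub_mem (fracIdeal_mono (by lia) hadd) (fracIdeal_mono hlt (w.mem_fracIdeal_v y))
    rw [add_sub_cancel_right, mem_fracIdeal_iff hx] at hx'
    lia
  · have hy' : x + y - x ∈ w.fracIdeal (w.v y + 1) :=
      sub_mem (fracIdeal_mono hyn hadd) (fracIdeal_mono hgt (w.mem_fracIdeal_v x))
    rw [add_sub_cancel_left, mem_fracIdeal_iff hy0] at hy'
    lia

theorem map_mulLeft_fracIdeal (hx : x ≠ 0) :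
    (w.fracIdeal n).map (AddMonoidHom.mulLeft x) = w.fracIdeal (w.v x + n) := by
  ext z
  rw [AddSubgroup.mem_map]
  refine ⟨?_, fun hz ↦ ⟨z / x, ?_, mul_div_cancel₀ z hx⟩⟩
  · rintro ⟨y, hy, rfl⟩
    exact (mul_mem_fracIdeal_iff hx).mpr hy
  · rwa [← mul_mem_fracIdeal_iff hx, mul_div_cancel₀ z hx]

variable (w) in
theorem relIndex_fracIdeal_add_one (n : ℤ) :
    (w.fracIdeal (n + 1)).relIndex (w.fracIdeal n) =
      (w.fracIdeal 1).relIndex (w.fracIdeal 0) := by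
  obtain ⟨x, hx, rfl⟩ := w.v_surj n
  rw [← AddSubgroup.relIndex_map_map_of_injective (w.fracIdeal 1) _
    (show Function.Injective (AddMonoidHom.mulLeft x) from mul_right_injective₀ hx),
    map_mulLeft_fracIdeal hx, map_mulLeft_fracIdeal hx, add_zero]

variable (w) in
theorem relIndex_fracIdeal_natCast (d : ℕ) :
    (w.fracIdeal d).relIndex (w.fracIdeal 0) =
      (w.fracIdeal 1).relIndex (w.fracIdeal 0) ^ d := by
  induction d with
  | zero => rw [Nat.cast_zero, AddSubgroup.relIndex_self, pow_zero]
  | succ d ih =>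
    rw [Nat.cast_succ, ← AddSubgroup.relIndex_mul_relIndex _ (w.fracIdeal d) _
      (fracIdeal_mono (by lia)) (fracIdeal_mono (by lia)), relIndex_fracIdeal_add_one, ih,
      pow_succ']

end FracIdeal

section FiniteResidueField

variable {K : Type*} [Field K]

open IsLocalRing TensorProduct in
theorem isFiniteRelIndex_fracIdeal_of_isFractionRing {R : Type*} (F : Type*) [CommRing R]
    [IsLocalRing R] [IsDomain R] [IsPrincipalIdealRing R] [Finite (ResidueField R)] [Field F]
    [Algebra R F] [IsFractionRing R F] [Algebra R K] [Algebra F K] [IsScalarTower R F K]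
    [FiniteDimensional F K] {w : DValuation K}
    (hint : ∀ r : R, algebraMap R K r ∈ w.fracIdeal 0)
    (hmax : ∀ r ∈ maximalIdeal R, algebraMap R K r ∈ w.fracIdeal 1) :
    (w.fracIdeal 1).IsFiniteRelIndex (w.fracIdeal 0) := by
  let N : Submodule R K :=
    { w.fracIdeal 0 with
      smul_mem' := fun r x hx ↦ by
        rw [Algebra.smul_def]
        exact mul_mem_fracIdeal (hint r) hx }
  have := finiteDimensional_residueField_tensorProduct (F := F) N
  have : Finite (ResidueField R ⊗[R] N) := Module.finite_of_finite (ResidueField R)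
  let f : N →+ ResidueField R ⊗[R] N := TensorProduct.mk R (ResidueField R) N 1
  have hker : f.ker ≤ (w.fracIdeal 1).addSubgroupOf (w.fracIdeal 0) := by
    intro x hx
    have hx' : x ∈ maximalIdeal R • (⊤ : Submodule R N) :=
      LinearMap.ker_tensorProductMk N (I := maximalIdeal R) ▸ hx
    refine Submodule.smul_induction_on hx' (fun r hr y _ ↦ ?_) fun _ _ ↦ add_mem
    change r • (y : K) ∈ w.fracIdeal 1
    rw [Algebra.smul_def]
    exact mul_mem_fracIdeal (hmax r hr) y.2
  rw [AddSubgroup.isFiniteRelIndex_iff_finiteIndex]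
  exact AddSubgroup.finiteIndex_of_le hker

theorem exists_v_algebraMap_ne_zero (F : Type*) [Field F] [Algebra F K] [Algebra.IsAlgebraic F K]
    (w : DValuation K) : ∃ a : F, a ≠ 0 ∧ w.v (algebraMap F K a) ≠ 0 := by
  by_contra! htriv
  -- The valuation ring contains `F`, and subrings of `K` containing `F` are closed under inverses.
  let A : Subalgebra F K :=
    { w.fracIdeal 0 with
      mul_mem' := mul_mem_fracIdeal
      algebraMap_mem' := fun a ↦ or_iff_not_imp_left.mpr fun ha ↦
        (htriv a ((map_ne_zero _).mp ha)).ge }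
  obtain ⟨x, hx, hvx⟩ := w.v_surj 1
  have hxA : x ∈ A := Or.inr (by lia)
  have hinv : x⁻¹ ∈ w.fracIdeal 0 :=
    A.inv_mem_of_algebraic (x := ⟨x, hxA⟩) (Algebra.IsAlgebraic.isAlgebraic x)
  rw [mem_fracIdeal_iff (inv_ne_zero hx), ← one_div, w.v_div one_ne_zero hx, v_one] at hinv
  lia

variable {p : ℕ} [Fact p.Prime] [Algebra ℚ_[p] K] {w : DValuation K}

theorem v_algebraMap_padic_pos [Algebra.IsAlgebraic ℚ_[p] K]
    (hext : ∀ x : ℚ_[p], x ≠ 0 →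
      w.v (algebraMap ℚ_[p] K x) = w.v (algebraMap ℚ_[p] K (p : ℚ_[p])) * x.valuation) :
    0 < w.v (algebraMap ℚ_[p] K (p : ℚ_[p])) := by
  have hp : algebraMap ℚ_[p] K (p : ℚ_[p]) ≠ 0 :=
    (map_ne_zero _).mpr (NeZero.ne _)
  have hp_mem : algebraMap ℚ_[p] K (p : ℚ_[p]) ∈ w.fracIdeal 0 := by
    rw [map_natCast, ← nsmul_one]
    exact nsmul_mem w.one_mem_fracIdeal_zero p
  refine ((mem_fracIdeal_iff hp).mp hp_mem).lt_of_ne' fun hp0 ↦ ?_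
  obtain ⟨a, ha, hva⟩ := w.exists_v_algebraMap_ne_zero ℚ_[p]
  exact hva (by rw [hext a ha, hp0, zero_mul])

theorem isFiniteRelIndex_fracIdeal_of_padic [FiniteDimensional ℚ_[p] K]
    (hext : ∀ x : ℚ_[p], x ≠ 0 →
      w.v (algebraMap ℚ_[p] K x) = w.v (algebraMap ℚ_[p] K (p : ℚ_[p])) * x.valuation) :
    (w.fracIdeal 1).IsFiniteRelIndex (w.fracIdeal 0) := by
  have hp := v_algebraMap_padic_pos hext
  let _ : Algebra ℤ_[p] K := Algebra.compHom K (algebraMap ℤ_[p] ℚ_[p])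
  have : IsScalarTower ℤ_[p] ℚ_[p] K := .of_algebraMap_eq fun _ ↦ rfl
  have : Finite (IsLocalRing.ResidueField ℤ_[p]) :=
    .of_equiv _ (PadicInt.residueField (p := p)).symm.toEquiv
  have hint (r : ℤ_[p]) : algebraMap ℤ_[p] K r ∈ w.fracIdeal 0 := by
    rw [IsScalarTower.algebraMap_apply ℤ_[p] ℚ_[p] K]
    refine or_iff_not_imp_left.mpr fun hr ↦ ?_
    rw [hext _ ((map_ne_zero _).mp hr)]
    exact mul_nonneg hp.le PadicInt.valuation_coe_nonneg
  refine isFiniteRelIndex_fracIdeal_of_isFractionRing ℚ_[p] hint fun r hr ↦ ?_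
  rw [PadicInt.maximalIdeal_eq_span_p, Ideal.mem_span_singleton] at hr
  obtain ⟨s, rfl⟩ := hr
  rw [map_mul]
  refine mul_mem_fracIdeal (m := 1) (n := 0) (Or.inr ?_) (hint s)
  rwa [IsScalarTower.algebraMap_apply ℤ_[p] ℚ_[p] K, map_natCast (algebraMap ℤ_[p] ℚ_[p])]

end FiniteResidueField

section Ramified

variable {K L : Type*} [Field K] [Field L] [Algebra K L] {w : DValuation K} {wL : DValuation L}

/-- The normalized valuation `wL` of `L` restricts to `e` times the normalized valuation `w` of
`K`, that is, `wL` lies above `w` with ramification index `e`. -/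
def HasRamificationIdx (w : DValuation K) (wL : DValuation L) (e : ℤ) : Prop :=
  ∀ x : K, x ≠ 0 → wL.v (algebraMap K L x) = e * w.v x

theorem algebraMap_mem_fracIdeal_iff {e : ℤ} (hram : w.HasRamificationIdx wL e) {m n : ℤ}
    (hlt : e * (n - 1) < m) (hle : m ≤ e * n) {x : K} :
    algebraMap K L x ∈ wL.fracIdeal m ↔ x ∈ w.fracIdeal n := by
  rcases eq_or_ne x 0 with rfl | hx
  · simp only [map_zero, zero_mem]
  rw [mem_fracIdeal_iff hx, mem_fracIdeal_iff ((map_ne_zero _).mpr hx), hram x hx]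
  have he : 0 < e := by linarith
  refine ⟨fun h ↦ ?_, fun h ↦ hle.trans (mul_le_mul_of_nonneg_left h he.le)⟩
  by_contra! hx_lt
  have := mul_le_mul_of_nonneg_left (Int.le_sub_one_of_lt hx_lt) he.le
  lia

variable (hram : w.HasRamificationIdx wL 2)
include hram

theorem odd_v_algebraMap_mul {P : L} (hP0 : P ≠ 0) (hP : Odd (wL.v P)) {b : K} (hb : b ≠ 0) :
    Odd (wL.v (algebraMap K L b * P)) := by
  rw [wL.v_mul ((map_ne_zero _).mpr hb) hP0, hram b hb]
  exact (even_two_mul _).add_odd hP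

theorem algebraMap_mul_mem_fracIdeal_of_add_mem {P : L} (hP0 : P ≠ 0) (hP : Odd (wL.v P))
    {a b : K} {n : ℤ} (hadd : algebraMap K L a + algebraMap K L b * P ∈ wL.fracIdeal n) :
    algebraMap K L b * P ∈ wL.fracIdeal n := by
  rcases eq_or_ne a 0 with rfl | ha
  · rwa [map_zero, zero_add] at hadd
  rcases eq_or_ne b 0 with rfl | hb
  · simp only [map_zero, zero_mul, zero_mem]
  refine mem_fracIdeal_of_add_mem ((map_ne_zero _).mpr ha) (fun h ↦ ?_) hadd
  have hodd := odd_v_algebraMap_mul hram hP0 hP hb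
  rw [← h, hram a ha] at hodd
  exact Int.not_even_iff_odd.mpr hodd (even_two_mul _)

variable [Algebra.IsQuadraticExtension K L] [Algebra.IsSeparable K L] {σ : L ≃ₐ[K] L}

theorem v_add_v_algEquiv (hσ : σ ≠ 1) {y : L} (hy : y ≠ 0) :
    wL.v y + wL.v (σ y) = 2 * w.v (Algebra.norm K y) := by
  rw [← hram _ (Algebra.norm_ne_zero_iff.mpr hy), algebraMap_norm_eq_mul hσ,
    wL.v_mul hy ((map_ne_zero σ).mpr hy)]

theorem v_algEquiv_le_of_odd (hσ : σ ≠ 1) {y : L} (hy : y ≠ 0) (hodd : Odd (wL.v y)) :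
    wL.v (σ y) ≤ wL.v y := by
  have htr : algebraMap K L (Algebra.trace K L y) + algebraMap K L (-1) * y = σ y := by
    rw [algebraMap_trace_eq_add hσ, map_neg, map_one]
    ring
  have hmem := algebraMap_mul_mem_fracIdeal_of_add_mem hram hy hodd (n := wL.v (σ y)) <| by
    rw [htr]
    exact wL.mem_fracIdeal_v (σ y)
  rwa [map_neg, map_one, neg_one_mul, neg_mem_iff, mem_fracIdeal_iff hy] at hmem

theorem v_algEquiv_of_odd (hσ : σ ≠ 1) {y : L} (hy : y ≠ 0) (hodd : Odd (wL.v y)) :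
    wL.v (σ y) = wL.v y := by
  have hodd' : Odd (wL.v (σ y)) := by
    have h := v_add_v_algEquiv hram hσ hy
    grind
  refine (v_algEquiv_le_of_odd hram hσ hy hodd).antisymm ?_
  have h := v_algEquiv_le_of_odd hram hσ ((map_ne_zero σ).mpr hy) hodd'
  rwa [algEquiv_involutive_of_ne_one hσ y] at h

theorem v_algEquiv (hσ : σ ≠ 1) {y : L} (hy : y ≠ 0) : wL.v (σ y) = wL.v y := by
  rcases Int.even_or_odd (wL.v y) with heven | hodd
  · obtain ⟨P, hP0, hP⟩ := wL.v_surj 1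
    have hyP : Odd (wL.v (y * P)) := by
      rw [wL.v_mul hy hP0, hP]
      exact heven.add_one
    have h := v_algEquiv_of_odd hram hσ (mul_ne_zero hy hP0) hyP
    rw [map_mul, wL.v_mul hy hP0, wL.v_mul ((map_ne_zero σ).mpr hy) ((map_ne_zero σ).mpr hP0),
      v_algEquiv_of_odd hram hσ hP0 (hP ▸ odd_one)] at h
    exact add_right_cancel h
  · exact v_algEquiv_of_odd hram hσ hy hodd

theorem algEquiv_mem_fracIdeal (hσ : σ ≠ 1) {y : L} {n : ℤ} (hy : y ∈ wL.fracIdeal n) :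
    σ y ∈ wL.fracIdeal n := by
  rcases eq_or_ne y 0 with rfl | hy0
  · rwa [map_zero]
  rwa [mem_fracIdeal_iff ((map_ne_zero σ).mpr hy0), v_algEquiv hram hσ hy0,
    ← mem_fracIdeal_iff hy0]

theorem algEquiv_ne_self_of_odd (hσ : σ ≠ 1) {P : L} (hP0 : P ≠ 0)
    (hP : Odd (wL.v P)) : σ P ≠ P := by
  intro hfix
  obtain ⟨a, rfl⟩ := mem_range_algebraMap_of_fixed hσ hfix
  rw [hram a ((map_ne_zero _).mp hP0)] at hP
  exact Int.not_even_iff_odd.mpr hP (even_two_mul _)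

theorem v_norm {y : L} (hy : y ≠ 0) : w.v (Algebra.norm K y) = wL.v y := by
  obtain ⟨σ, hσ⟩ := exists_algEquiv_ne_one_of_isQuadraticExtension K L
  have h := v_add_v_algEquiv hram hσ hy
  rw [v_algEquiv hram hσ hy] at h
  lia

theorem norm_mem_fracIdeal_iff {y : L} {n : ℤ} :
    Algebra.norm K y ∈ w.fracIdeal n ↔ y ∈ wL.fracIdeal n := by
  rcases eq_or_ne y 0 with rfl | hy
  · simp only [Algebra.norm_zero, zero_mem]
  rw [mem_fracIdeal_iff hy, mem_fracIdeal_iff (Algebra.norm_ne_zero_iff.mpr hy), v_norm hram hy]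

theorem surjOn_norm_fracIdeal
    (hunits : ∀ u : K, u ≠ 0 → w.v u = 0 → ∃ y : L, Algebra.norm K y = u) (n : ℤ) :
    Set.SurjOn (Algebra.norm K) (wL.fracIdeal n : Set L) (w.fracIdeal n : Set K) := by
  intro x hx
  suffices ∃ y : L, Algebra.norm K y = x by
    obtain ⟨y, rfl⟩ := this
    exact ⟨y, (norm_mem_fracIdeal_iff hram).mp hx, rfl⟩
  rcases eq_or_ne x 0 with rfl | hx0
  · exact ⟨0, Algebra.norm_zero⟩
  obtain ⟨z, hz, hvz⟩ := wL.v_surj (w.v x)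
  have hNz : Algebra.norm K z ≠ 0 := Algebra.norm_ne_zero_iff.mpr hz
  obtain ⟨y, hy⟩ := hunits (x / Algebra.norm K z) (div_ne_zero hx0 hNz)
    (by rw [w.v_div hx0 hNz, v_norm hram hz, hvz, sub_self])
  exact ⟨y * z, by rw [map_mul, hy, div_mul_cancel₀ _ hNz]⟩

theorem fracIdeal_zero_eq_sup :
    wL.fracIdeal 0 = (w.fracIdeal 0).map (algebraMap K L : K →+ L) ⊔ wL.fracIdeal 1 := by
  have halg {x : K} : algebraMap K L x ∈ wL.fracIdeal 0 ↔ x ∈ w.fracIdeal 0 :=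
    algebraMap_mem_fracIdeal_iff hram (by lia) (by lia)
  apply le_antisymm
  · intro y hy
    obtain ⟨σ, hσ⟩ := exists_algEquiv_ne_one_of_isQuadraticExtension K L
    obtain ⟨P, hP0, hP⟩ := wL.v_surj 1
    have hPodd : Odd (wL.v P) := hP ▸ odd_one
    obtain ⟨a, b, rfl⟩ :=
      exists_eq_algebraMap_add_mul hσ (algEquiv_ne_self_of_odd hram hσ hP0 hPodd) y
    have hbP := algebraMap_mul_mem_fracIdeal_of_add_mem hram hP0 hPodd hy
    have ha : a ∈ w.fracIdeal 0 := halg.mp ((add_mem_cancel_right hbP).mp hy)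
    refine AddSubgroup.add_mem_sup ⟨a, ha, rfl⟩ ?_
    rcases eq_or_ne b 0 with rfl | hb
    · simp only [map_zero, zero_mul, zero_mem]
    have hbP0 : algebraMap K L b * P ≠ 0 := mul_ne_zero ((map_ne_zero _).mpr hb) hP0
    have hodd := odd_v_algebraMap_mul hram hP0 hPodd hb
    rw [mem_fracIdeal_iff hbP0] at hbP ⊢
    grind
  · refine sup_le (AddSubgroup.map_le_iff_le_comap.mpr fun x hx ↦ halg.mpr hx) ?_
    exact fracIdeal_mono zero_le_one

theorem relIndex_fracIdeal_one_eq :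
    (wL.fracIdeal 1).relIndex (wL.fracIdeal 0) = (w.fracIdeal 1).relIndex (w.fracIdeal 0) := by
  have hcomap : (wL.fracIdeal 1).comap (algebraMap K L : K →+ L) = w.fracIdeal 1 := by
    ext x
    exact algebraMap_mem_fracIdeal_iff hram (by lia) (by lia)
  rw [fracIdeal_zero_eq_sup hram, AddSubgroup.relIndex_sup_right, ← hcomap,
    AddSubgroup.relIndex_comap]

section Uniformizer

variable (hσ : σ ≠ 1) {P : L} (hP0 : P ≠ 0) (hP : wL.v P = 1)
include hσ hP0 hP

theorem two_mem_fracIdeal : (2 : L) ∈ wL.fracIdeal (wL.v (σ P - P) - 1) := by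
  have htr : algebraMap K L (Algebra.trace K L P) + algebraMap K L (-2) * P = σ P - P := by
    rw [algebraMap_trace_eq_add hσ, map_neg, map_ofNat]
    ring
  have hmem := algebraMap_mul_mem_fracIdeal_of_add_mem hram hP0 (hP ▸ odd_one)
    (n := wL.v (σ P - P)) <| by
      rw [htr]
      exact wL.mem_fracIdeal_v (σ P - P)
  rw [map_neg, map_ofNat, neg_mul, neg_mem_iff, mul_comm] at hmem
  rwa [← mul_mem_fracIdeal_iff hP0, hP, add_sub_cancel]

theorem algEquiv_sub_self_mem_fracIdeal {z : L} {n : ℤ} (hz : z ∈ wL.fracIdeal n) :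
    σ z - z ∈ wL.fracIdeal (n + (wL.v (σ P - P) - 1)) := by
  have hPodd : Odd (wL.v P) := hP ▸ odd_one
  obtain ⟨a, b, rfl⟩ :=
    exists_eq_algebraMap_add_mul hσ (algEquiv_ne_self_of_odd hram hσ hP0 hPodd) z
  have hb : algebraMap K L b ∈ wL.fracIdeal (n - 1) := by
    rw [← mul_mem_fracIdeal_iff hP0, hP, add_sub_cancel, mul_comm]
    exact algebraMap_mul_mem_fracIdeal_of_add_mem hram hP0 hPodd hz
  have hz' : σ (algebraMap K L a + algebraMap K L b * P) -
      (algebraMap K L a + algebraMap K L b * P) = algebraMap K L b * (σ P - P) := by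
    rw [map_add, map_mul, AlgEquiv.commutes, AlgEquiv.commutes]
    ring
  rw [hz', ← add_sub_assoc, ← sub_add_eq_add_sub]
  exact mul_mem_fracIdeal hb (wL.mem_fracIdeal_v (σ P - P))

theorem algebraMap_trace_mem_fracIdeal {z : L} {n : ℤ} (hz : z ∈ wL.fracIdeal n) :
    algebraMap K L (Algebra.trace K L z) ∈ wL.fracIdeal (n + (wL.v (σ P - P) - 1)) := by
  have htr : algebraMap K L (Algebra.trace K L z) = z * 2 + (σ z - z) := by
    rw [algebraMap_trace_eq_add hσ]
    ring
  rw [htr]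
  exact add_mem (mul_mem_fracIdeal hz (two_mem_fracIdeal hram hσ hP0 hP))
    (algEquiv_sub_self_mem_fracIdeal hram hσ hP0 hP hz)

theorem one_le_v_algEquiv_sub_self : 1 ≤ wL.v (σ P - P) := by
  have hne := sub_ne_zero.mpr (algEquiv_ne_self_of_odd hram hσ hP0 (hP ▸ odd_one))
  have hmem : P ∈ wL.fracIdeal 1 := hP ▸ wL.mem_fracIdeal_v P
  exact (mem_fracIdeal_iff hne).mp (sub_mem (algEquiv_mem_fracIdeal hram hσ hmem) hmem)

theorem norm_sub_norm_mem_fracIdeal {x y : L} (hx : x ∈ wL.fracIdeal 0)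
    (hxy : y - x ∈ wL.fracIdeal (wL.v (σ P - P))) :
    Algebra.norm K y - Algebra.norm K x ∈ w.fracIdeal (wL.v (σ P - P)) := by
  have hexpand : Algebra.norm K y - Algebra.norm K x =
      Algebra.trace K L (x * σ (y - x)) + Algebra.norm K (y - x) := by
    apply (algebraMap K L).injective
    rw [map_sub, map_add, algebraMap_trace_eq_add hσ, algebraMap_norm_eq_mul hσ,
      algebraMap_norm_eq_mul hσ, algebraMap_norm_eq_mul hσ, map_mul,
      algEquiv_involutive_of_ne_one hσ, map_sub]
    ring
  rw [hexpand]
  refine add_mem ?_ ((norm_mem_fracIdeal_iff hram).mpr hxy)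
  refine (algebraMap_mem_fracIdeal_iff hram ?_ ?_).mp <| algebraMap_trace_mem_fracIdeal hram hσ
    hP0 hP (mul_mem_fracIdeal hx (algEquiv_mem_fracIdeal hram hσ hxy))
  all_goals lia

theorem sub_one_mem_fracIdeal_of_norm_eq_one [(w.fracIdeal 1).IsFiniteRelIndex (w.fracIdeal 0)]
    (hunits : ∀ u : K, u ≠ 0 → w.v u = 0 → ∃ y : L, Algebra.norm K y = u) {y : L}
    (hy : Algebra.norm K y = 1) : y - 1 ∈ wL.fracIdeal (wL.v (σ P - P)) := by
  obtain ⟨d, hd⟩ : ∃ d : ℕ, wL.v (σ P - P) = d :=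
    Int.eq_ofNat_of_zero_le (zero_le_one.trans (one_le_v_algEquiv_sub_self hram hσ hP0 hP))
  have hcongr : ∀ x ∈ wL.fracIdeal 0, ∀ z ∈ wL.fracIdeal 0, z - x ∈ wL.fracIdeal d →
      Algebra.norm K z - Algebra.norm K x ∈ w.fracIdeal d := by
    intro x hx z _
    rw [← hd]
    exact norm_sub_norm_mem_fracIdeal hram hσ hP0 hP hx
  have hindex : (wL.fracIdeal d).relIndex (wL.fracIdeal 0) =
      (w.fracIdeal d).relIndex (w.fracIdeal 0) := by
    rw [relIndex_fracIdeal_natCast, relIndex_fracIdeal_natCast, relIndex_fracIdeal_one_eq hram]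
  have : (wL.fracIdeal d).IsFiniteRelIndex (wL.fracIdeal 0) := by
    rw [AddSubgroup.isFiniteRelIndex_iff_relIndex_ne_zero, hindex, relIndex_fracIdeal_natCast]
    exact pow_ne_zero d AddSubgroup.relIndex_ne_zero
  have hy_mem : y ∈ wL.fracIdeal 0 := by
    rw [← norm_mem_fracIdeal_iff hram, hy]
    exact w.one_mem_fracIdeal_zero
  rw [hd]
  refine sub_mem_of_relIndex_le (fun _ ↦ (norm_mem_fracIdeal_iff hram).mpr)
    (surjOn_norm_fracIdeal hram hunits 0) hcongr hindex.le wL.one_mem_fracIdeal_zero hy_mem ?_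
  rw [hy, map_one, sub_self]
  exact zero_mem _

end Uniformizer

end Ramified

end DValuation

theorem units_not_contained_in_norms_of_ramified_general {K L : Type*} [Field K] [Field L]
    [Algebra K L] [Algebra.IsQuadraticExtension K L] [Algebra.IsSeparable K L]
    {w : DValuation K} {wL : DValuation L} (hram : w.HasRamificationIdx wL 2)
    [(w.fracIdeal 1).IsFiniteRelIndex (w.fracIdeal 0)] :
    ∃ u : K, u ≠ 0 ∧ w.v u = 0 ∧ ¬ ∃ y : L, y ≠ 0 ∧ Algebra.norm K y = u := by
  by_contra! hunits
  obtain ⟨σ, hσ⟩ := exists_algEquiv_ne_one_of_isQuadraticExtension K L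
  obtain ⟨P, hP0, hP⟩ := wL.v_surj 1
  have hδ : σ P - P ≠ 0 :=
    sub_ne_zero.mpr (DValuation.algEquiv_ne_self_of_odd hram hσ hP0 (hP ▸ odd_one))
  have hmem : σ P / P - 1 ∈ wL.fracIdeal (wL.v (σ P - P)) :=
    DValuation.sub_one_mem_fracIdeal_of_norm_eq_one hram hσ hP0 hP
      (fun u hu hvu ↦ (hunits u hu hvu).imp fun _ ↦ And.right) (norm_algEquiv_div_self σ hP0)
  rw [div_sub_one hP0, DValuation.mem_fracIdeal_iff (div_ne_zero hδ hP0), wL.v_div hδ hP0,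
    hP] at hmem
  lia

/-- If `L|K` is a ramified quadratic extension of a finite extension `K` of
`ℚ_p` (ramification index `2`, encoded by `w_L ∘ (K → L) = 2·w_K` for the
normalized valuations), then the unit group `𝔬^×` of `K` is not contained in
the norm group `N_{L|K}(L^×)`:  some unit of `K` is not a norm from `L^×`. -/
theorem units_not_contained_in_norms_of_ramified
    (p : ℕ) [Fact p.Prime]
    (K : Type*) [Field K] [Algebra ℚ_[p] K] [FiniteDimensional ℚ_[p] K]
    (w : DValuation K)
    (hext : ∀ x : ℚ_[p], x ≠ 0 →
      w.v (algebraMap ℚ_[p] K x) = w.v (algebraMap ℚ_[p] K (p : ℚ_[p])) * x.valuation)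
    (L : Type*) [Field L] [Algebra K L] (hL2 : Module.finrank K L = 2)
    (wL : DValuation L)
    (hram : ∀ x : K, x ≠ 0 → wL.v (algebraMap K L x) = 2 * w.v x) :
    ∃ u : K, u ≠ 0 ∧ w.v u = 0 ∧ ¬ ∃ y : L, y ≠ 0 ∧ Algebra.norm K y = u := by
  have : CharZero K := charZero_of_injective_algebraMap (algebraMap ℚ_[p] K).injective
  have : Algebra.IsQuadraticExtension K L := ⟨hL2⟩
  have := DValuation.isFiniteRelIndex_fracIdeal_of_padic hext
  exact units_not_contained_in_norms_of_ramified_general hram
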